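/- Let v¹, v², v³ : ℝ × ℝ → ℝ be smooth solutions of the heat equation v_t + v_xx = 0 whose Wronskian with respect to x, W(v̄) := det[v̄, v̄_x, v̄_xx], is nonzero at every point (t,x). Define ξ⁰ := (∂_x W(v̄))/W(v̄), η¹ := det[v̄, v̄_xx, v̄_xxx]/W(v̄), and η⁰ := −2·det[v̄_x, v̄_xx, v̄_xxx]/W(v̄). Then the triple (ξ⁰, η¹, η⁰) satisfies the determining system for the no-go case of regular reduction operators of the Burgers equation: ξ⁰_t + 2ξ⁰·ξ⁰_x + ξ⁰_xx − 2η¹_x = 0, η¹_t + 2ξ⁰_x·η¹ + η¹_xx + η⁰_x = 0, and η⁰_t + 2ξ⁰_x·η⁰ + η⁰_xx = 0 at every point. -/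

import Mathlib

/-- Partial derivative with respect to the first variable `t`. -/
noncomputable def pt (f : ℝ × ℝ → ℝ) : ℝ × ℝ → ℝ :=
  fun p => deriv (fun s => f (s, p.2)) p.1

/-- Partial derivative with respect to the second variable `x`. -/
noncomputable def px (f : ℝ × ℝ → ℝ) : ℝ × ℝ → ℝ :=
  fun p => deriv (fun s => f (p.1, s)) p.2

/-- Determinant of the 3×3 matrix with columns `a`, `b`, `c`. -/
noncomputable def det3 (a b c : Fin 3 → ℝ) : ℝ :=
  Matrix.det !![a 0, b 0, c 0; a 1, b 1, c 1; a 2, b 2, c 2]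

/-!
By Cramer's rule, `v¹, v², v³` are solutions of the third-order linear equation
`u_xxx = ξ⁰ u_xx - η¹ u_x - (η⁰/2) u`. Apply the heat operator `H = ∂_t + ∂_xx` to this relation.
It kills `u` and all its `x`-derivatives, so `H (f w) = (H f) w + 2 f_x w_x` for each
`w ∈ {u, u_x, u_xx}`; after eliminating `u_xxx` what remains is a linear relation between
`u_xx`, `u_x`, `u`, whose coefficients are, up to constant factors, the left-hand sides of the
determining system. It holds for `u = v¹, v², v³`, so the coefficients vanish where `W(v̄) ≠ 0`.
-/

open Filter
open scoped Topology

section PartialDerivatives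

variable {f g : ℝ × ℝ → ℝ} {p : ℝ × ℝ}

lemma hasDerivAt_px (hf : DifferentiableAt ℝ f p) :
    HasDerivAt (fun s => f (p.1, s)) (px f p) p.2 :=
  (hf.comp (f := fun s => (p.1, s)) p.2 (by fun_prop)).hasDerivAt

lemma hasDerivAt_pt (hf : DifferentiableAt ℝ f p) :
    HasDerivAt (fun s => f (s, p.2)) (pt f p) p.1 :=
  (hf.comp (f := fun s => (s, p.2)) p.1 (by fun_prop)).hasDerivAt

lemma px_eq_fderiv (hf : DifferentiableAt ℝ f p) : px f p = fderiv ℝ f p (0, 1) :=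
  (hf.hasFDerivAt.comp_hasDerivAt (f := fun s => (p.1, s)) p.2
    ((hasDerivAt_const _ _).prodMk (hasDerivAt_id _))).deriv

lemma pt_eq_fderiv (hf : DifferentiableAt ℝ f p) : pt f p = fderiv ℝ f p (1, 0) :=
  (hf.hasFDerivAt.comp_hasDerivAt (f := fun s => (s, p.2)) p.1
    ((hasDerivAt_id _).prodMk (hasDerivAt_const _ _))).deriv

lemma px_add (hf : DifferentiableAt ℝ f p) (hg : DifferentiableAt ℝ g p) :
    px (f + g) p = px f p + px g p :=
  ((hasDerivAt_px hf).add (hasDerivAt_px hg)).deriv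

lemma px_sub (hf : DifferentiableAt ℝ f p) (hg : DifferentiableAt ℝ g p) :
    px (f - g) p = px f p - px g p :=
  ((hasDerivAt_px hf).sub (hasDerivAt_px hg)).deriv

lemma pt_sub (hf : DifferentiableAt ℝ f p) (hg : DifferentiableAt ℝ g p) :
    pt (f - g) p = pt f p - pt g p :=
  ((hasDerivAt_pt hf).sub (hasDerivAt_pt hg)).deriv

lemma px_mul (hf : DifferentiableAt ℝ f p) (hg : DifferentiableAt ℝ g p) :
    px (f * g) p = px f p * g p + f p * px g p :=
  ((hasDerivAt_px hf).mul (hasDerivAt_px hg)).deriv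

lemma pt_mul (hf : DifferentiableAt ℝ f p) (hg : DifferentiableAt ℝ g p) :
    pt (f * g) p = pt f p * g p + f p * pt g p :=
  ((hasDerivAt_pt hf).mul (hasDerivAt_pt hg)).deriv

lemma px_const_smul (k : ℝ) (f : ℝ × ℝ → ℝ) : px (k • f) = k • px f :=
  funext fun _ => deriv_const_mul_field k

lemma pt_const_smul (k : ℝ) (f : ℝ × ℝ → ℝ) : pt (k • f) = k • pt f :=
  funext fun _ => deriv_const_mul_field k

lemma px_zero : px 0 = 0 :=
  funext fun _ => deriv_const _ _

lemma px_eventuallyEq (h : f =ᶠ[𝓝 p] g) : px f =ᶠ[𝓝 p] px g :=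
  h.eventuallyEq_nhds.mono fun q hq =>
    (hq.comp_tendsto (g := fun s => (q.1, s))
      (ContinuousAt.tendsto (x := q.2) (by fun_prop))).deriv_eq

lemma pt_eventuallyEq (h : f =ᶠ[𝓝 p] g) : pt f =ᶠ[𝓝 p] pt g :=
  h.eventuallyEq_nhds.mono fun q hq =>
    (hq.comp_tendsto (g := fun s => (s, q.2))
      (ContinuousAt.tendsto (x := q.1) (by fun_prop))).deriv_eq

lemma eventually_differentiableAt (hf : ContDiffAt ℝ 1 f p) :
    ∀ᶠ q in 𝓝 p, DifferentiableAt ℝ f q :=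
  (hf.eventually (by simp)).mono fun _ hq => hq.differentiableAt one_ne_zero

lemma px_eventuallyEq_fderiv (hf : ContDiffAt ℝ 1 f p) :
    px f =ᶠ[𝓝 p] fun q => fderiv ℝ f q (0, 1) :=
  (eventually_differentiableAt hf).mono fun _ => px_eq_fderiv

lemma pt_eventuallyEq_fderiv (hf : ContDiffAt ℝ 1 f p) :
    pt f =ᶠ[𝓝 p] fun q => fderiv ℝ f q (1, 0) :=
  (eventually_differentiableAt hf).mono fun _ => pt_eq_fderiv

lemma contDiffAt_px {m n : WithTop ℕ∞} (hf : ContDiffAt ℝ n f p) (hmn : m + 1 ≤ n) :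
    ContDiffAt ℝ m (px f) p :=
  ((hf.fderiv_right hmn).clm_apply contDiffAt_const).congr_of_eventuallyEq
    (px_eventuallyEq_fderiv (hf.of_le (le_add_self.trans hmn)))

lemma contDiffAt_pt {m n : WithTop ℕ∞} (hf : ContDiffAt ℝ n f p) (hmn : m + 1 ≤ n) :
    ContDiffAt ℝ m (pt f) p :=
  ((hf.fderiv_right hmn).clm_apply contDiffAt_const).congr_of_eventuallyEq
    (pt_eventuallyEq_fderiv (hf.of_le (le_add_self.trans hmn)))

lemma pt_px_comm (hf : ContDiffAt ℝ 2 f p) : pt (px f) p = px (pt f) p := by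
  have hf1 : ContDiffAt ℝ 1 f p := hf.of_le one_le_two
  have hx : DifferentiableAt ℝ (px f) p :=
    (contDiffAt_px hf one_add_one_eq_two.le).differentiableAt one_ne_zero
  have ht : DifferentiableAt ℝ (pt f) p :=
    (contDiffAt_pt hf one_add_one_eq_two.le).differentiableAt one_ne_zero
  have hd : DifferentiableAt ℝ (fderiv ℝ f) p :=
    (hf.fderiv_right one_add_one_eq_two.le).differentiableAt one_ne_zero
  have hsymm : IsSymmSndFDerivAt ℝ f p := hf.isSymmSndFDerivAt (by simp)
  rw [pt_eq_fderiv hx, px_eq_fderiv ht, (px_eventuallyEq_fderiv hf1).fderiv_eq,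
    (pt_eventuallyEq_fderiv hf1).fderiv_eq, fderiv_clm_apply hd (by fun_prop),
    fderiv_clm_apply hd (by fun_prop)]
  simpa using hsymm (1, 0) (0, 1)

end PartialDerivatives

section HeatOperator

variable {f g : ℝ × ℝ → ℝ} {p : ℝ × ℝ}

/-- The heat operator `∂_t + ∂_xx`, so that the heat equation reads `heatOp u = 0`. -/
noncomputable def heatOp (f : ℝ × ℝ → ℝ) : ℝ × ℝ → ℝ := pt f + px (px f)

lemma heatOp_eventuallyEq (h : f =ᶠ[𝓝 p] g) : heatOp f =ᶠ[𝓝 p] heatOp g :=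
  (pt_eventuallyEq h).add (px_eventuallyEq (px_eventuallyEq h))

lemma heatOp_const_smul (k : ℝ) (f : ℝ × ℝ → ℝ) : heatOp (k • f) = k • heatOp f := by
  simp only [heatOp, pt_const_smul, px_const_smul, smul_add]

lemma heatOp_sub (hf : ContDiffAt ℝ 2 f p) (hg : ContDiffAt ℝ 2 g p) :
    heatOp (f - g) p = heatOp f p - heatOp g p := by
  have hpx : px (f - g) =ᶠ[𝓝 p] px f - px g := by
    filter_upwards [eventually_differentiableAt (hf.of_le one_le_two),
      eventually_differentiableAt (hg.of_le one_le_two)] with q hfq hgq using px_sub hfq hgq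
  have hfx := (contDiffAt_px hf one_add_one_eq_two.le).differentiableAt one_ne_zero
  have hgx := (contDiffAt_px hg one_add_one_eq_two.le).differentiableAt one_ne_zero
  simp only [heatOp, Pi.add_apply]
  rw [pt_sub (hf.differentiableAt two_ne_zero) (hg.differentiableAt two_ne_zero),
    (px_eventuallyEq hpx).eq_of_nhds, px_sub hfx hgx]
  ring

lemma heatOp_mul (hf : ContDiffAt ℝ 2 f p) (hg : ContDiffAt ℝ 2 g p) :
    heatOp (f * g) p = heatOp f p * g p + 2 * px f p * px g p + f p * heatOp g p := by
  have hpx : px (f * g) =ᶠ[𝓝 p] px f * g + f * px g := by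
    filter_upwards [eventually_differentiableAt (hf.of_le one_le_two),
      eventually_differentiableAt (hg.of_le one_le_two)] with q hfq hgq using px_mul hfq hgq
  have hf0 := hf.differentiableAt two_ne_zero
  have hg0 := hg.differentiableAt two_ne_zero
  have hfx := (contDiffAt_px hf one_add_one_eq_two.le).differentiableAt one_ne_zero
  have hgx := (contDiffAt_px hg one_add_one_eq_two.le).differentiableAt one_ne_zero
  simp only [heatOp, Pi.add_apply]
  rw [pt_mul hf0 hg0, (px_eventuallyEq hpx).eq_of_nhds, px_add (hfx.mul hg0) (hf0.mul hgx),
    px_mul hfx hg0, px_mul hf0 hgx]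
  ring

lemma heatOp_px_comm (hf : ContDiffAt ℝ 3 f p) : heatOp (px f) p = px (heatOp f) p := by
  have hft := (contDiffAt_pt hf (m := 1) (by norm_num)).differentiableAt one_ne_zero
  have hfxx := (contDiffAt_px (contDiffAt_px hf (m := 2) (by norm_num))
    one_add_one_eq_two.le).differentiableAt one_ne_zero
  simp only [heatOp, Pi.add_apply]
  rw [pt_px_comm (hf.of_le (by norm_num)), px_add hft hfxx]

lemma heatOp_px_eventuallyEq_zero (hf : ContDiffAt ℝ 3 f p) (hheat : heatOp f =ᶠ[𝓝 p] 0) :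
    heatOp (px f) =ᶠ[𝓝 p] 0 := by
  filter_upwards [hf.eventually (by simp), px_eventuallyEq hheat] with q hfq hq
  rw [heatOp_px_comm hfq, hq, px_zero]

lemma heatOp_mul_of_heatOp_eq_zero (hf : ContDiffAt ℝ 2 f p) (hg : ContDiffAt ℝ 2 g p)
    (hheat : heatOp g p = 0) :
    heatOp (f * g) p = heatOp f p * g p + 2 * px f p * px g p := by
  rw [heatOp_mul hf hg, hheat, mul_zero, add_zero]

end HeatOperator

section DeterminingSystem

/-- The determining system for the coefficients of a reduction operator of the Burgers equation
in the no-go case, at the point `p`. -/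
def DeterminingSystemAt (ξ0 η1 η0 : ℝ × ℝ → ℝ) (p : ℝ × ℝ) : Prop :=
  pt ξ0 p + 2 * ξ0 p * px ξ0 p + px (px ξ0) p - 2 * px η1 p = 0 ∧
  pt η1 p + 2 * px ξ0 p * η1 p + px (px η1) p + px η0 p = 0 ∧
  pt η0 p + 2 * px ξ0 p * η0 p + px (px η0) p = 0

variable {ξ0 η1 η0 : ℝ × ℝ → ℝ} {p : ℝ × ℝ}

lemma heatOp_combination_of_heatOp_eq_zero {w₀ w₁ w₂ : ℝ × ℝ → ℝ}
    (hξ : ContDiffAt ℝ 2 ξ0 p) (hη1 : ContDiffAt ℝ 2 η1 p) (hη0 : ContDiffAt ℝ 2 η0 p)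
    (hw₀ : ContDiffAt ℝ 2 w₀ p) (hw₁ : ContDiffAt ℝ 2 w₁ p) (hw₂ : ContDiffAt ℝ 2 w₂ p)
    (hheat₀ : heatOp w₀ p = 0) (hheat₁ : heatOp w₁ p = 0) (hheat₂ : heatOp w₂ p = 0) :
    heatOp (ξ0 * w₂ - η1 * w₁ - (1 / 2 : ℝ) • (η0 * w₀)) p =
      (heatOp ξ0 p * w₂ p + 2 * px ξ0 p * px w₂ p)
        - (heatOp η1 p * w₁ p + 2 * px η1 p * px w₁ p)
        - 1 / 2 * (heatOp η0 p * w₀ p + 2 * px η0 p * px w₀ p) := by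
  have h₂ : ContDiffAt ℝ 2 (ξ0 * w₂) p := hξ.mul hw₂
  have h₁ : ContDiffAt ℝ 2 (η1 * w₁) p := hη1.mul hw₁
  have h₂₁ : ContDiffAt ℝ 2 (ξ0 * w₂ - η1 * w₁) p := h₂.sub h₁
  have h₀ : ContDiffAt ℝ 2 ((1 / 2 : ℝ) • (η0 * w₀)) p := contDiffAt_const.smul (hη0.mul hw₀)
  rw [heatOp_sub h₂₁ h₀, heatOp_sub h₂ h₁, heatOp_const_smul, Pi.smul_apply, smul_eq_mul,
    heatOp_mul_of_heatOp_eq_zero hξ hw₂ hheat₂, heatOp_mul_of_heatOp_eq_zero hη1 hw₁ hheat₁,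
    heatOp_mul_of_heatOp_eq_zero hη0 hw₀ hheat₀]

lemma determiningSystem_combination_eq_zero {u : ℝ × ℝ → ℝ}
    (hu : ContDiffAt ℝ 5 u p) (hξ : ContDiffAt ℝ 2 ξ0 p) (hη1 : ContDiffAt ℝ 2 η1 p)
    (hη0 : ContDiffAt ℝ 2 η0 p) (hheat : heatOp u =ᶠ[𝓝 p] 0)
    (hode : px (px (px u)) =ᶠ[𝓝 p] ξ0 * px (px u) - η1 * px u - (1 / 2 : ℝ) • (η0 * u)) :
    -(pt η0 p + 2 * px ξ0 p * η0 p + px (px η0) p) / 2 * u p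
      + -(pt η1 p + 2 * px ξ0 p * η1 p + px (px η1) p + px η0 p) * px u p
      + (pt ξ0 p + 2 * ξ0 p * px ξ0 p + px (px ξ0) p - 2 * px η1 p) * px (px u) p = 0 := by
  have hu1 : ContDiffAt ℝ 4 (px u) p := contDiffAt_px hu (by norm_num)
  have hu2 : ContDiffAt ℝ 3 (px (px u)) p := contDiffAt_px hu1 (by norm_num)
  have hheat1 := heatOp_px_eventuallyEq_zero (hu.of_le (by norm_num)) hheat
  have hheat2 := heatOp_px_eventuallyEq_zero (hu1.of_le (by norm_num)) hheat1
  have hheat3 := heatOp_px_eventuallyEq_zero hu2 hheat2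
  have hode_p : px (px (px u)) p
      = ξ0 p * px (px u) p - η1 p * px u p - 1 / 2 * (η0 p * u p) := hode.eq_of_nhds
  have heatOp_hode := (heatOp_eventuallyEq hode).eq_of_nhds
  rw [hheat3.eq_of_nhds, heatOp_combination_of_heatOp_eq_zero hξ hη1 hη0
    (hu.of_le (by norm_num)) (hu1.of_le (by norm_num)) (hu2.of_le (by norm_num))
    hheat.eq_of_nhds hheat1.eq_of_nhds hheat2.eq_of_nhds] at heatOp_hode
  simp only [heatOp, Pi.add_apply, Pi.zero_apply] at heatOp_hode
  linear_combination -heatOp_hode - 2 * px ξ0 p * hode_p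

end DeterminingSystem

section Det3

lemma det3_eq (a b c : Fin 3 → ℝ) : det3 a b c =
    a 0 * b 1 * c 2 - a 0 * c 1 * b 2 - b 0 * a 1 * c 2 + b 0 * c 1 * a 2
      + c 0 * a 1 * b 2 - c 0 * b 1 * a 2 := by
  simp [det3, Matrix.det_fin_three]

lemma det3_self_left (a c : Fin 3 → ℝ) : det3 a a c = 0 := by
  rw [det3_eq]; ring

lemma det3_self_right (a b : Fin 3 → ℝ) : det3 a b b = 0 := by
  rw [det3_eq]; ring

lemma det3_mul_cramer (a b c d : Fin 3 → ℝ) (i : Fin 3) :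
    det3 a b c * d i = det3 a b d * c i - det3 a c d * b i + det3 b c d * a i := by
  simp only [det3_eq]
  fin_cases i <;> simp only [Fin.zero_eta, Fin.mk_one, Fin.reduceFinMk] <;> ring

lemma eq_zero_of_det3_ne_zero {a b c : Fin 3 → ℝ} (h : det3 a b c ≠ 0) {α β γ : ℝ}
    (hlin : ∀ i, α * a i + β * b i + γ * c i = 0) : α = 0 ∧ β = 0 ∧ γ = 0 := by
  have hvec : ![α, β, γ] = 0 := Matrix.eq_zero_of_mulVec_eq_zero h <| by
    ext i
    fin_cases i <;> simpa [Matrix.mulVec, dotProduct, Fin.sum_univ_three, mul_comm] using hlin _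
  exact ⟨congrFun hvec 0, congrFun hvec 1, congrFun hvec 2⟩

variable {a b c : Fin 3 → ℝ × ℝ → ℝ} {p : ℝ × ℝ}

lemma contDiffAt_det3 {n : WithTop ℕ∞} (ha : ∀ i, ContDiffAt ℝ n (a i) p)
    (hb : ∀ i, ContDiffAt ℝ n (b i) p) (hc : ∀ i, ContDiffAt ℝ n (c i) p) :
    ContDiffAt ℝ n (fun q => det3 (a · q) (b · q) (c · q)) p := by
  simp only [det3_eq]
  fun_prop

lemma px_det3 (ha : ∀ i, DifferentiableAt ℝ (a i) p) (hb : ∀ i, DifferentiableAt ℝ (b i) p)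
    (hc : ∀ i, DifferentiableAt ℝ (c i) p) :
    px (fun q => det3 (a · q) (b · q) (c · q)) p =
      det3 (fun i => px (a i) p) (b · p) (c · p) + det3 (a · p) (fun i => px (b i) p) (c · p)
        + det3 (a · p) (b · p) (fun i => px (c i) p) := by
  have hprod (i j k : Fin 3) :=
    ((hasDerivAt_px (ha i)).mul (hasDerivAt_px (hb j))).mul (hasDerivAt_px (hc k))
  have hsum := (((((hprod 0 1 2).sub (hprod 0 2 1)).sub (hprod 1 0 2)).add (hprod 2 0 1)).add
    (hprod 1 2 0)).sub (hprod 2 1 0)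
  refine Eq.trans (congrArg (deriv · p.2) (funext fun s => ?_)) (hsum.deriv.trans ?_)
  · simp only [det3_eq, Pi.add_apply, Pi.sub_apply, Pi.mul_apply]
    ring
  · simp only [det3_eq, Pi.mul_apply]
    ring

end Det3

section Wronskian

/-- The Wronskian `W(v̄) = det[v̄, v̄_x, v̄_xx]` with respect to `x`. -/
noncomputable def wronskian (v : Fin 3 → ℝ × ℝ → ℝ) : ℝ × ℝ → ℝ := fun p =>
  det3 (fun i => v i p) (fun i => px (v i) p) (fun i => px (px (v i)) p)

/-- The coefficient `ξ⁰` of the reduction operator built from `v̄`; like `etaOne` and `etaZero`, it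
is meaningful only where the Wronskian does not vanish. -/
noncomputable def xiZero (v : Fin 3 → ℝ × ℝ → ℝ) : ℝ × ℝ → ℝ := fun p =>
  px (wronskian v) p / wronskian v p

/-- The coefficient `η¹` of the reduction operator built from `v̄`. -/
noncomputable def etaOne (v : Fin 3 → ℝ × ℝ → ℝ) : ℝ × ℝ → ℝ := fun p =>
  det3 (fun i => v i p) (fun i => px (px (v i)) p) (fun i => px (px (px (v i))) p) / wronskian v p

/-- The coefficient `η⁰` of the reduction operator built from `v̄`. -/
noncomputable def etaZero (v : Fin 3 → ℝ × ℝ → ℝ) : ℝ × ℝ → ℝ := fun p =>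
  -2 * det3 (fun i => px (v i) p) (fun i => px (px (v i)) p) (fun i => px (px (px (v i))) p)
    / wronskian v p

variable {v : Fin 3 → ℝ × ℝ → ℝ} {p : ℝ × ℝ}

lemma contDiffAt_wronskian {m n : WithTop ℕ∞} (hv : ∀ i, ContDiffAt ℝ n (v i) p)
    (hmn : m + 2 ≤ n) : ContDiffAt ℝ m (wronskian v) p := by
  have hmn' : m + 1 + 1 ≤ n := by rwa [add_assoc, one_add_one_eq_two]
  have hvx (i) : ContDiffAt ℝ (m + 1) (px (v i)) p := contDiffAt_px (hv i) hmn'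
  exact contDiffAt_det3 (fun i => (hv i).of_le (le_self_add.trans hmn))
    (fun i => (hvx i).of_le le_self_add) (fun i => contDiffAt_px (hvx i) le_rfl)

lemma px_wronskian (hv : ∀ i, ContDiffAt ℝ 3 (v i) p) :
    px (wronskian v) p =
      det3 (fun i => v i p) (fun i => px (v i) p) (fun i => px (px (px (v i))) p) := by
  have hvx (i) : ContDiffAt ℝ 2 (px (v i)) p := contDiffAt_px (hv i) (by norm_num)
  have hvxx (i) : ContDiffAt ℝ 1 (px (px (v i))) p := contDiffAt_px (hvx i) (by norm_num)
  refine (px_det3 (fun i => (hv i).differentiableAt three_ne_zero)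
    (fun i => (hvx i).differentiableAt two_ne_zero)
    (fun i => (hvxx i).differentiableAt one_ne_zero)).trans ?_
  rw [det3_self_left, det3_self_right, zero_add, zero_add]

lemma px_px_px_eq_of_wronskian_ne_zero (hv : ∀ i, ContDiffAt ℝ 3 (v i) p)
    (hW : wronskian v p ≠ 0) (i : Fin 3) :
    px (px (px (v i))) p =
      xiZero v p * px (px (v i)) p - etaOne v p * px (v i) p - 1 / 2 * (etaZero v p * v i p) := by
  simp only [xiZero, etaOne, etaZero, px_wronskian hv]
  field_simp
  rw [wronskian]
  linear_combination det3_mul_cramer (v · p) (fun i => px (v i) p) (fun i => px (px (v i)) p)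
    (fun i => px (px (px (v i))) p) i

lemma px_px_px_eventuallyEq_of_wronskian_ne_zero (hv : ∀ i, ContDiffAt ℝ 3 (v i) p)
    (hW : wronskian v p ≠ 0) (i : Fin 3) :
    px (px (px (v i))) =ᶠ[𝓝 p]
      xiZero v * px (px (v i)) - etaOne v * px (v i) - (1 / 2 : ℝ) • (etaZero v * v i) := by
  have hWcont : ContinuousAt (wronskian v) p :=
    (contDiffAt_wronskian hv (m := 1) (by norm_num)).continuousAt
  filter_upwards [eventually_all.2 fun j => (hv j).eventually (by simp),
    hWcont.eventually_ne hW] with q hvq hWq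
  exact px_px_px_eq_of_wronskian_ne_zero hvq hWq i

lemma contDiffAt_xiZero_etaOne_etaZero (hv : ∀ i, ContDiffAt ℝ 5 (v i) p)
    (hW : wronskian v p ≠ 0) :
    ContDiffAt ℝ 2 (xiZero v) p ∧ ContDiffAt ℝ 2 (etaOne v) p ∧ ContDiffAt ℝ 2 (etaZero v) p := by
  have hW3 : ContDiffAt ℝ 3 (wronskian v) p := contDiffAt_wronskian hv (by norm_num)
  have hW2 : ContDiffAt ℝ 2 (wronskian v) p := hW3.of_le (by norm_num)
  have hv1 (i) : ContDiffAt ℝ 4 (px (v i)) p := contDiffAt_px (hv i) (by norm_num)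
  have hv2 (i) : ContDiffAt ℝ 3 (px (px (v i))) p := contDiffAt_px (hv1 i) (by norm_num)
  have hv3 (i) : ContDiffAt ℝ 2 (px (px (px (v i)))) p := contDiffAt_px (hv2 i) (by norm_num)
  replace hv (i) : ContDiffAt ℝ 2 (v i) p := (hv i).of_le (by norm_num)
  replace hv1 (i) : ContDiffAt ℝ 2 (px (v i)) p := (hv1 i).of_le (by norm_num)
  replace hv2 (i) : ContDiffAt ℝ 2 (px (px (v i))) p := (hv2 i).of_le (by norm_num)
  exact ⟨(contDiffAt_px hW3 (by norm_num)).div hW2 hW, (contDiffAt_det3 hv hv2 hv3).div hW2 hW,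
    (contDiffAt_const.mul (contDiffAt_det3 hv1 hv2 hv3)).div hW2 hW⟩

end Wronskian

theorem stmt9_general (v : Fin 3 → ℝ × ℝ → ℝ) (p : ℝ × ℝ) (hv : ∀ i, ContDiffAt ℝ 5 (v i) p)
    (hheat : ∀ i, heatOp (v i) =ᶠ[𝓝 p] 0) (hW : wronskian v p ≠ 0) :
    DeterminingSystemAt (xiZero v) (etaOne v) (etaZero v) p := by
  obtain ⟨hξ, hη1, hη0⟩ := contDiffAt_xiZero_etaOne_etaZero hv hW
  have hode := px_px_px_eventuallyEq_of_wronskian_ne_zero (fun i => (hv i).of_le (by norm_num)) hW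
  obtain ⟨h₀, h₁, h₂⟩ := eq_zero_of_det3_ne_zero hW fun i =>
    determiningSystem_combination_eq_zero (hv i) hξ hη1 hη0 (hheat i) (hode i)
  exact ⟨h₂, neg_eq_zero.1 h₁, by linarith⟩

/-- Given a triple of smooth solutions of the heat equation with nonvanishing
Wronskian, the coefficients `ξ⁰ = (W(v̄))_x/W(v̄)`, `η¹ = det[v̄,v̄_xx,v̄_xxx]/W(v̄)`,
`η⁰ = −2 det[v̄_x,v̄_xx,v̄_xxx]/W(v̄)` satisfy the determining system for the no-go
case of regular reduction operators of the Burgers equation. -/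
theorem stmt9 (v : Fin 3 → ℝ × ℝ → ℝ) (hv : ∀ i, ContDiff ℝ (⊤ : ℕ∞) (v i))
    (hheat : ∀ i, ∀ p : ℝ × ℝ, pt (v i) p + px (px (v i)) p = 0)
    (hW : ∀ p : ℝ × ℝ,
      det3 (fun i => v i p) (fun i => px (v i) p) (fun i => px (px (v i)) p) ≠ 0) :
    let W : ℝ × ℝ → ℝ := fun p =>
      det3 (fun i => v i p) (fun i => px (v i) p) (fun i => px (px (v i)) p)
    let ξ0 : ℝ × ℝ → ℝ := fun p => px W p / W p
    let η1 : ℝ × ℝ → ℝ := fun p =>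
      det3 (fun i => v i p) (fun i => px (px (v i)) p) (fun i => px (px (px (v i))) p)
        / W p
    let η0 : ℝ × ℝ → ℝ := fun p =>
      -2 * det3 (fun i => px (v i) p) (fun i => px (px (v i)) p)
        (fun i => px (px (px (v i))) p) / W p
    ∀ p : ℝ × ℝ,
      pt ξ0 p + 2 * ξ0 p * px ξ0 p + px (px ξ0) p - 2 * px η1 p = 0 ∧
      pt η1 p + 2 * px ξ0 p * η1 p + px (px η1) p + px η0 p = 0 ∧
      pt η0 p + 2 * px ξ0 p * η0 p + px (px η0) p = 0 := by
  intro _ _ _ _ p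
  exact stmt9_general v p (fun i => (contDiff_infty.1 (hv i) 5).contDiffAt)
    (fun i => .of_forall (hheat i)) (hW p)
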